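/- Fix an integer base b ≥ 2, s ≥ 1, and integers t, m with 0 ≤ t ≤ m. Let P be a (t,m,s)-net in base b and set L = m − t. Then for every j ∈ ℕ_0^s with |j| ≥ L+1, every i ∈ ∇_j and every k ∈ Δ_{j−1}, one has |Σ_{p∈P} Ψ^j_{i,k}(p)| ≤ b^{t−1} (b−1)^J b^{|j|/2}, where J = #{ℓ ∈ {1,…,s} : j_ℓ ≥ 1}. -/

import Mathlib

open MeasureTheory ENNReal Set

noncomputable section

/-- The index set `Δ_{j-1}` (for level `j`). -/
def deltaIdx (b j : ℕ) : Finset ℕ := if j = 0 then {0} else Finset.range (b ^ (j - 1))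

/-- The index set `∇_j`. -/
def nablaIdx (b j : ℕ) : Finset ℕ := if j = 0 then {0} else Finset.range b

/-- The univariate Haar-type wavelet `ψ^j_{i,k}` in base `b`. -/
def haarPsi (b : ℕ) (j i k : ℕ) (x : ℝ) : ℝ :=
  if j = 0 then (Set.Ico (0:ℝ) 1).indicator (fun _ => (1:ℝ)) x
  else (b : ℝ) ^ ((j : ℝ) / 2 - 1) *
    ((b : ℝ) *
        (Set.Ico ((b:ℝ) ^ (-(j:ℝ)) * ((b:ℝ) * k + i))
          ((b:ℝ) ^ (-(j:ℝ)) * ((b:ℝ) * k + i + 1))).indicator (fun _ => (1:ℝ)) x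
      - (Set.Ico ((b:ℝ) ^ (1 - (j:ℝ)) * k)
          ((b:ℝ) ^ (1 - (j:ℝ)) * (k + 1))).indicator (fun _ => (1:ℝ)) x)

/-- The multivariate tensor product wavelet `Ψ^j_{i,k}`. -/
def haarPsiS (b s : ℕ) (j i k : Fin s → ℕ) (x : Fin s → ℝ) : ℝ :=
  ∏ ℓ, haarPsi b (j ℓ) (i ℓ) (k ℓ) (x ℓ)

/-- The unit cube `[0,1]^s`. -/
def cube (s : ℕ) : Set (Fin s → ℝ) := Set.Icc 0 1

/-- The index set `Δ_{j-1}` for multi-indices. -/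
def deltaIdxS (b s : ℕ) (j : Fin s → ℕ) : Finset (Fin s → ℕ) :=
  Fintype.piFinset fun ℓ => deltaIdx b (j ℓ)

/-- The index set `∇_j` for multi-indices. -/
def nablaIdxS (b s : ℕ) (j : Fin s → ℕ) : Finset (Fin s → ℕ) :=
  Fintype.piFinset fun ℓ => nablaIdx b (j ℓ)

/-- The Haar coefficient `⟨f, Ψ^j_{i,k}⟩ = ∫_{[0,1]^s} f Ψ^j_{i,k}`. -/
def haarCoef (b s : ℕ) (f : (Fin s → ℝ) → ℝ) (j i k : Fin s → ℕ) : ℝ :=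
  ∫ x in cube s, f x * haarPsiS b s j i k x

/-- Finite `ℓ^p`-type norm with exponent `p ∈ [1,∞]` (maximum when `p = ∞`). -/
def lpIdx (p : ℝ≥0∞) {ι : Type*} (A : Finset ι) (g : ι → ℝ≥0∞) : ℝ≥0∞ :=
  if p = ∞ then A.sup g else (∑ a ∈ A, g a ^ p.toReal) ^ (1 / p.toReal)

/-- `ℓ^q`-type norm over an arbitrary index type (supremum when `q = ∞`). -/
def lqIdx (q : ℝ≥0∞) {ι : Type*} (g : ι → ℝ≥0∞) : ℝ≥0∞ :=
  if q = ∞ then ⨆ i, g i else (∑' i, g i ^ q.toReal) ^ (1 / q.toReal)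

/-- The Haar wavelet norm `‖f‖_{wav,α,s,p,q}` (with the conventions for `p = ∞`, `q = ∞`). -/
def wavNorm (b s : ℕ) (α : ℝ) (p q : ℝ≥0∞) (f : (Fin s → ℝ) → ℝ) : ℝ≥0∞ :=
  lqIdx q fun j : Fin s → ℕ =>
    ENNReal.ofReal ((b : ℝ) ^ ((α - 1 / p.toReal + 1 / 2) * ∑ ℓ, (j ℓ : ℝ))) *
      lpIdx p (deltaIdxS b s j ×ˢ nablaIdxS b s j)
        (fun ki => ENNReal.ofReal |haarCoef b s f j ki.2 ki.1|)

/-- The pointwise wavelet expansion `S(f)`. -/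
def wavExp (b s : ℕ) (f : (Fin s → ℝ) → ℝ) (x : Fin s → ℝ) : ℝ :=
  ∑' j : Fin s → ℕ, ∑ k ∈ deltaIdxS b s j, ∑ i ∈ nablaIdxS b s j,
    haarCoef b s f j i k * haarPsiS b s j i k x

/-- The elementary `b`-adic box `E^j_a`. -/
def elemBox (b s : ℕ) (j a : Fin s → ℕ) : Set (Fin s → ℝ) :=
  {x | ∀ ℓ, (a ℓ : ℝ) * ((b : ℝ) ^ (j ℓ))⁻¹ ≤ x ℓ ∧ x ℓ < ((a ℓ : ℝ) + 1) * ((b : ℝ) ^ (j ℓ))⁻¹}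

open Classical in
/-- A `(t,m,s)`-net in base `b`: a multiset of `b^m` points of `[0,1)^s` such that every
elementary box of volume `b^{t-m}` contains exactly `b^t` of the points. -/
def IsNet (b s t m : ℕ) (P : Multiset (Fin s → ℝ)) : Prop :=
  Multiset.card P = b ^ m ∧ (∀ x ∈ P, ∀ ℓ, 0 ≤ x ℓ ∧ x ℓ < 1) ∧
    ∀ j a : Fin s → ℕ, (∑ ℓ, j ℓ) = m - t → (∀ ℓ, a ℓ < b ^ j ℓ) →
      Multiset.card (P.filter (· ∈ elemBox b s j a)) = b ^ t

/-- The space `V^{s,L}`, spanned by indicators of elementary boxes of volume `b^{-L}`. -/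
def Vspace (b s L : ℕ) : Submodule ℝ ((Fin s → ℝ) → ℝ) :=
  Submodule.span ℝ
    {f | ∃ j a : Fin s → ℕ, (∑ ℓ, j ℓ) = L ∧ (∀ ℓ, a ℓ < b ^ j ℓ) ∧
      f = (elemBox b s j a).indicator fun _ => (1:ℝ)}

/-!
With `j - 1` truncated at `0` in each coordinate, `Ψ^j_{i,k}` is supported on the elementary box
`E^{j-1}_k`, where it is bounded by `b^{|j|/2} ((b-1)/b)^J`. Choose `e` with `j - 1 ≤ e ≤ j` and
`|e| = |j| - 1 ≥ L`. The support is covered by `b^{|e|-|j-1|} = b^{J-1}` boxes of level `e`, and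
each of these lies in an elementary box of volume `b^{-L}`, so holds at most `b^t` points of the
net.
-/

theorem exists_between_sum_eq {ι : Type*} [Fintype ι] {f g : ι → ℕ} (hfg : f ≤ g) {n : ℕ}
    (hfn : ∑ l, f l ≤ n) (hng : n ≤ ∑ l, g l) : ∃ e, f ≤ e ∧ e ≤ g ∧ ∑ l, e l = n := by
  classical
  induction n, hfn using Nat.le_induction with
  | base => exact ⟨f, le_rfl, hfg, rfl⟩
  | succ n _ ih =>
    obtain ⟨e, hfe, heg, he⟩ := ih (by omega)
    obtain ⟨r, -, hr⟩ : ∃ r ∈ Finset.univ, e r < g r :=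
      Finset.exists_lt_of_sum_lt (by omega)
    refine ⟨e + Pi.single r 1, hfe.trans le_self_add, fun l => ?_, ?_⟩
    · obtain rfl | hl := eq_or_ne l r
      · simpa using hr
      · simpa [hl] using heg l
    · simp [Finset.sum_add_distrib, he]

theorem sum_sub_one_add_card_filter_one_le {ι : Type*} [Fintype ι] (j : ι → ℕ) :
    ∑ l, (j l - 1) + (Finset.univ.filter fun l => 1 ≤ j l).card = ∑ l, j l := by
  rw [Finset.card_filter, ← Finset.sum_add_distrib]
  refine Finset.sum_congr rfl fun l _ => ?_
  split_ifs <;> omega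

theorem countP_le_sum_countP {α ι : Type*} (P : Multiset α) (p : α → Prop) [DecidablePred p]
    (I : Finset ι) (q : ι → α → Prop) [∀ c, DecidablePred (q c)]
    (h : ∀ x ∈ P, p x → ∃ c ∈ I, q c x) : P.countP p ≤ ∑ c ∈ I, P.countP (q c) := by
  induction P using Multiset.induction_on with
  | empty => simp
  | cons x P ih =>
    simp only [Multiset.countP_cons, Finset.sum_add_distrib]
    refine add_le_add (ih fun y hy => h y (Multiset.mem_cons_of_mem hy)) ?_
    split_ifs with hp
    · obtain ⟨c, hc, hq⟩ := h x (Multiset.mem_cons_self x P) hp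
      simpa [hq] using Finset.single_le_sum (f := fun c => if q c x then 1 else 0)
        (fun _ _ => Nat.zero_le _) hc
    · exact Nat.zero_le _

theorem abs_sum_map_le_mul_countP {α : Type*} (P : Multiset α) {f : α → ℝ} {S : Set α}
    [DecidablePred (· ∈ S)] {C : ℝ} (h : ∀ x ∈ P, |f x| ≤ C * S.indicator 1 x) :
    |(P.map f).sum| ≤ C * P.countP (· ∈ S) := by
  induction P using Multiset.induction_on with
  | empty => simp
  | cons x P ih =>
    have hx : |f x| ≤ C * (if x ∈ S then 1 else 0) := by
      simpa [Set.indicator_apply] using h x (Multiset.mem_cons_self x P)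
    have hP := ih fun y hy => h y (Multiset.mem_cons_of_mem hy)
    rw [Multiset.map_cons, Multiset.sum_cons, Multiset.countP_cons]
    push_cast
    linarith [abs_add_le (f x) (P.map f).sum]

theorem abs_mul_indicator_sub_indicator_le {α : Type*} {A B : Set α} (hAB : A ⊆ B) {c : ℝ}
    (hc : 2 ≤ c) (x : α) :
    |c * A.indicator 1 x - B.indicator 1 x| ≤ (c - 1) * B.indicator 1 x := by
  by_cases hA : x ∈ A
  · simp [hA, hAB hA, abs_of_nonneg (by linarith : 0 ≤ c - 1)]
  · by_cases hB : x ∈ B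
    · simp only [hA, hB, not_false_eq_true, indicator_of_notMem, indicator_of_mem, Pi.one_apply,
        mul_zero, zero_sub, abs_neg, abs_one, mul_one]
      linarith
    · simp [hA, hB]

/-- The `b`-adic interval `[a b^{-j}, (a+1) b^{-j})`, the one-dimensional elementary box. -/
def bAdicInterval (b j a : ℕ) : Set ℝ :=
  Set.Ico ((a : ℝ) * ((b : ℝ) ^ j)⁻¹) (((a : ℝ) + 1) * ((b : ℝ) ^ j)⁻¹)

theorem mem_elemBox_iff {b s : ℕ} {d a : Fin s → ℕ} {x : Fin s → ℝ} :
    x ∈ elemBox b s d a ↔ ∀ l, x l ∈ bAdicInterval b (d l) (a l) :=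
  Iff.rfl

theorem mem_bAdicInterval_iff_floor {b : ℕ} (hb : 0 < b) {j a : ℕ} {x : ℝ} :
    x ∈ bAdicInterval b j a ↔ ⌊x * (b : ℝ) ^ j⌋ = a := by
  have hpow : (0 : ℝ) < (b : ℝ) ^ j := by positivity
  rw [bAdicInterval, Set.mem_Ico, Int.floor_eq_iff, mul_inv_le_iff₀ hpow, lt_mul_inv_iff₀ hpow,
    Int.cast_natCast]

theorem floor_mul_pow_eq_floor_div {b : ℕ} (hb : 0 < b) {d e : ℕ} (hde : d ≤ e) (x : ℝ) :
    ⌊x * (b : ℝ) ^ d⌋ = ⌊x * (b : ℝ) ^ e⌋ / (b ^ (e - d) : ℕ) := by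
  have hpow : (b : ℝ) ^ e = (b : ℝ) ^ d * (b ^ (e - d) : ℕ) := by
    rw [Nat.cast_pow, ← pow_add, Nat.add_sub_cancel' hde]
  rw [← Int.floor_div_natCast, hpow, ← mul_assoc, mul_div_cancel_right₀ _ (by positivity)]

theorem bAdicInterval_subset {b : ℕ} (hb : 0 < b) {d e : ℕ} (hde : d ≤ e) (a : ℕ) :
    bAdicInterval b e a ⊆ bAdicInterval b d (a / b ^ (e - d)) := fun x hx => by
  rw [mem_bAdicInterval_iff_floor hb] at hx ⊢
  rw [floor_mul_pow_eq_floor_div hb hde, hx, Int.natCast_div]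

theorem exists_mem_bAdicInterval_of_le {b : ℕ} (hb : 0 < b) {d e : ℕ} (hde : d ≤ e) {a : ℕ} {x : ℝ}
    (hx : x ∈ bAdicInterval b d a) :
    ∃ c ∈ Finset.Ico (a * b ^ (e - d)) ((a + 1) * b ^ (e - d)), x ∈ bAdicInterval b e c := by
  have hpow : (0 : ℤ) < (b ^ (e - d) : ℕ) := by positivity
  rw [mem_bAdicInterval_iff_floor hb, floor_mul_pow_eq_floor_div hb hde,
    Int.ediv_eq_iff_of_pos hpow] at hx
  have hfloor : (0 : ℤ) ≤ ⌊x * (b : ℝ) ^ e⌋ := le_trans (by positivity) hx.1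
  lift ⌊x * (b : ℝ) ^ e⌋ to ℕ using hfloor with c hc
  refine ⟨c, Finset.mem_Ico.2 ⟨by exact_mod_cast hx.1, ?_⟩,
    (mem_bAdicInterval_iff_floor hb).2 hc.symm⟩
  rw [add_one_mul]
  exact_mod_cast hx.2

theorem elemBox_subset {b : ℕ} (hb : 0 < b) {s : ℕ} {d e : Fin s → ℕ} (hde : d ≤ e)
    (a : Fin s → ℕ) : elemBox b s e a ⊆ elemBox b s d fun l => a l / b ^ (e l - d l) :=
  fun _ hx l => bAdicInterval_subset hb (hde l) (a l) (hx l)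

theorem exists_mem_elemBox_of_le {b : ℕ} (hb : 0 < b) {s : ℕ} {d e : Fin s → ℕ} (hde : d ≤ e)
    {a : Fin s → ℕ} {x : Fin s → ℝ} (hx : x ∈ elemBox b s d a) :
    ∃ c ∈ Fintype.piFinset fun l =>
        Finset.Ico (a l * b ^ (e l - d l)) ((a l + 1) * b ^ (e l - d l)),
      x ∈ elemBox b s e c := by
  choose c hc hxc using fun l => exists_mem_bAdicInterval_of_le hb (hde l) (hx l)
  exact ⟨c, Fintype.mem_piFinset.2 hc, hxc⟩

open Classical in
/-- Every elementary box of volume `b^{-L}` contains at most `N` points of `P`. For `L = m - t` and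
`N = b^t` this is the half of the net property on which the wavelet bound rests. -/
def HasElemBoxCountLE (b s L N : ℕ) (P : Multiset (Fin s → ℝ)) : Prop :=
  ∀ d a : Fin s → ℕ, ∑ l, d l = L → (∀ l, a l < b ^ d l) →
    P.countP (· ∈ elemBox b s d a) ≤ N

theorem IsNet.hasElemBoxCountLE {b s t m : ℕ} {P : Multiset (Fin s → ℝ)} (hP : IsNet b s t m P) :
    HasElemBoxCountLE b s (m - t) (b ^ t) P := fun d a hd ha => by
  rw [Multiset.countP_eq_card_filter, hP.2.2 d a hd ha]

namespace HasElemBoxCountLE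

variable {b s L N : ℕ} {P : Multiset (Fin s → ℝ)}

open Classical in
theorem countP_le_of_le_sum (hP : HasElemBoxCountLE b s L N P) (hb : 0 < b) {e a : Fin s → ℕ}
    (he : L ≤ ∑ l, e l) (ha : ∀ l, a l < b ^ e l) : P.countP (· ∈ elemBox b s e a) ≤ N := by
  obtain ⟨d, -, hde, hd⟩ := exists_between_sum_eq (f := 0) (g := e) zero_le (by simp) he
  have hcoarse : ∀ l, a l / b ^ (e l - d l) < b ^ d l := fun l =>
    Nat.div_lt_of_lt_mul (by rw [← pow_add, Nat.sub_add_cancel (hde l)]; exact ha l)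
  refine le_trans ?_ (hP d _ hd hcoarse)
  simp only [Multiset.countP_eq_card_filter]
  exact Multiset.card_le_card
    (Multiset.monotone_filter_right P fun _ hx => elemBox_subset hb hde a hx)

open Classical in
theorem countP_le_pow_mul (hP : HasElemBoxCountLE b s L N P) (hb : 0 < b) {d e a : Fin s → ℕ}
    (hde : d ≤ e) (he : L ≤ ∑ l, e l) (ha : ∀ l, a l < b ^ d l) :
    P.countP (· ∈ elemBox b s d a) ≤ b ^ (∑ l, (e l - d l)) * N := by
  set I := Fintype.piFinset fun l =>
    Finset.Ico (a l * b ^ (e l - d l)) ((a l + 1) * b ^ (e l - d l)) with hI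
  have hcard : I.card = b ^ ∑ l, (e l - d l) := by
    simp [hI, Fintype.card_piFinset, ← Nat.sub_mul, Finset.prod_pow_eq_pow_sum]
  have hlt : ∀ c ∈ I, ∀ l, c l < b ^ e l := fun c hc l =>
    calc c l < (a l + 1) * b ^ (e l - d l) :=
          (Finset.mem_Ico.1 (Fintype.mem_piFinset.1 hc l)).2
      _ ≤ b ^ d l * b ^ (e l - d l) := Nat.mul_le_mul_right _ (ha l)
      _ = b ^ e l := by rw [← pow_add, Nat.add_sub_cancel' (hde l)]
  calc P.countP (· ∈ elemBox b s d a)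
      ≤ ∑ c ∈ I, P.countP (· ∈ elemBox b s e c) :=
        countP_le_sum_countP P _ I _ fun _ _ hx => exists_mem_elemBox_of_le hb hde hx
    _ ≤ I.card • N :=
        Finset.sum_le_card_nsmul I _ N fun c hc => hP.countP_le_of_le_sum hb he (hlt c hc)
    _ = b ^ (∑ l, (e l - d l)) * N := by rw [hcard, smul_eq_mul]

open Classical in
theorem mul_countP_sub_one_le (hP : HasElemBoxCountLE b s L N P) (hb : 0 < b) {j k : Fin s → ℕ}
    (hj : L + 1 ≤ ∑ l, j l) (hk : ∀ l, k l < b ^ (j l - 1)) :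
    b * P.countP (· ∈ elemBox b s (fun l => j l - 1) k) ≤
      b ^ (Finset.univ.filter fun l => 1 ≤ j l).card * N := by
  have hJ : 0 < (Finset.univ.filter fun l => 1 ≤ j l).card := by
    obtain ⟨l, -, hl⟩ := Finset.exists_ne_zero_of_sum_ne_zero (by omega : ∑ l, j l ≠ 0)
    exact Finset.card_pos.2 ⟨l, by simpa using Nat.one_le_iff_ne_zero.2 hl⟩
  have hsum := sum_sub_one_add_card_filter_one_le j
  obtain ⟨e, hje, -, he⟩ := exists_between_sum_eq (f := fun l => j l - 1) (g := j)
    (n := ∑ l, j l - 1) (fun l => Nat.sub_le _ _) (by omega) (Nat.sub_le _ _)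
  have hexp : ∑ l, (e l - (j l - 1)) + 1 = (Finset.univ.filter fun l => 1 ≤ j l).card := by
    rw [Finset.sum_tsub_distrib _ fun l _ => hje l]
    omega
  rw [← hexp, pow_succ', mul_assoc]
  exact Nat.mul_le_mul_left b (hP.countP_le_pow_mul hb hje (by omega) hk)

end HasElemBoxCountLE

theorem lt_pow_of_mem_deltaIdx {b j k : ℕ} (hk : k ∈ deltaIdx b j) : k < b ^ (j - 1) := by
  unfold deltaIdx at hk
  split_ifs at hk with hj
  · simp_all
  · exact Finset.mem_range.1 hk

theorem haarPsi_zero (b i : ℕ) : haarPsi b 0 i 0 = (bAdicInterval b 0 0).indicator 1 := by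
  ext x
  simp [haarPsi, bAdicInterval, Set.indicator_apply]

theorem haarPsi_succ {b : ℕ} (hb : 0 < b) (n i k : ℕ) (x : ℝ) :
    haarPsi b (n + 1) i k x = (b : ℝ) ^ (((n + 1 : ℕ) : ℝ) / 2) / b *
      (b * (bAdicInterval b (n + 1) (b * k + i)).indicator 1 x -
        (bAdicInterval b n k).indicator 1 x) := by
  have hb₀ : (0 : ℝ) < b := by exact_mod_cast hb
  have hfine : (b : ℝ) ^ (-((n + 1 : ℕ) : ℝ)) = ((b : ℝ) ^ (n + 1))⁻¹ := by
    rw [Real.rpow_neg hb₀.le, Real.rpow_natCast]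
  have hcoarse : (b : ℝ) ^ (1 - ((n + 1 : ℕ) : ℝ)) = ((b : ℝ) ^ n)⁻¹ := by
    rw [← Real.rpow_natCast, ← Real.rpow_neg hb₀.le]
    push_cast
    ring_nf
  rw [haarPsi, if_neg n.succ_ne_zero, hfine, hcoarse, Real.rpow_sub_one hb₀.ne']
  simp only [bAdicInterval, Nat.cast_add, Nat.cast_mul, mul_comm ((b : ℝ) ^ _)⁻¹]
  rfl

theorem abs_haarPsi_le {b : ℕ} (hb : 2 ≤ b) {j i k : ℕ} (hi : i ∈ nablaIdx b j)
    (hk : k ∈ deltaIdx b j) (x : ℝ) :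
    |haarPsi b j i k x| ≤ (b : ℝ) ^ ((j : ℝ) / 2) *
      (((b : ℝ) - 1) / b) ^ (if 1 ≤ j then 1 else 0) *
        (bAdicInterval b (j - 1) k).indicator 1 x := by
  cases j with
  | zero =>
    obtain rfl : k = 0 := by simpa [deltaIdx] using hk
    have hnonneg : 0 ≤ (bAdicInterval b 0 0).indicator (1 : ℝ → ℝ) x :=
      Set.indicator_nonneg (fun _ _ => zero_le_one) x
    simp [haarPsi_zero, abs_of_nonneg hnonneg]
  | succ n =>
    have hib : i < b := by simpa [nablaIdx] using hi
    have hsub : bAdicInterval b (n + 1) (b * k + i) ⊆ bAdicInterval b n k := by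
      simpa [Nat.mul_add_div (by omega : 0 < b), Nat.div_eq_of_lt hib] using
        bAdicInterval_subset (by omega : 0 < b) n.le_succ (b * k + i)
    rw [haarPsi_succ (by omega), abs_mul, abs_of_nonneg (by positivity)]
    calc _ ≤ (b : ℝ) ^ (((n + 1 : ℕ) : ℝ) / 2) / b *
          (((b : ℝ) - 1) * (bAdicInterval b n k).indicator 1 x) := by
          gcongr
          exact abs_mul_indicator_sub_indicator_le hsub (by exact_mod_cast hb) x
      _ = _ := by
          rw [if_pos (Nat.le_add_left 1 n), pow_one, Nat.add_sub_cancel]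
          ring

theorem prod_indicator_bAdicInterval (b s : ℕ) (d a : Fin s → ℕ) (x : Fin s → ℝ) :
    ∏ l, (bAdicInterval b (d l) (a l)).indicator (1 : ℝ → ℝ) (x l) =
      (elemBox b s d a).indicator 1 x := by
  classical
  simp only [Set.indicator_apply, Pi.one_apply, mem_elemBox_iff, Finset.prod_ite_zero,
    Finset.mem_univ, true_imp_iff, Finset.prod_const_one]

theorem abs_haarPsiS_le {b : ℕ} (hb : 2 ≤ b) {s : ℕ} {j i k : Fin s → ℕ}
    (hi : ∀ l, i l ∈ nablaIdx b (j l)) (hk : ∀ l, k l ∈ deltaIdx b (j l)) (x : Fin s → ℝ) :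
    |haarPsiS b s j i k x| ≤ (b : ℝ) ^ ((∑ l, (j l : ℝ)) / 2) *
      (((b : ℝ) - 1) / b) ^ (Finset.univ.filter fun l => 1 ≤ j l).card *
        (elemBox b s (fun l => j l - 1) k).indicator 1 x := by
  have hb₀ : (0 : ℝ) < b := by exact_mod_cast (by omega : 0 < b)
  rw [haarPsiS, Finset.abs_prod, Finset.sum_div, Real.rpow_sum_of_pos hb₀, Finset.card_filter,
    ← Finset.prod_pow_eq_pow_sum, ← prod_indicator_bAdicInterval, ← Finset.prod_mul_distrib,
    ← Finset.prod_mul_distrib]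
  exact Finset.prod_le_prod (fun _ _ => abs_nonneg _) fun l _ =>
    abs_haarPsi_le hb (hi l) (hk l) (x l)

theorem net_wavelet_sum_bound_general {b s L N : ℕ} (hb : 2 ≤ b) {P : Multiset (Fin s → ℝ)}
    (hP : HasElemBoxCountLE b s L N P) {j i k : Fin s → ℕ} (hj : L + 1 ≤ ∑ l, j l)
    (hi : ∀ l, i l ∈ nablaIdx b (j l)) (hk : ∀ l, k l ∈ deltaIdx b (j l)) :
    |(P.map (haarPsiS b s j i k)).sum| ≤
      (N : ℝ) / b * ((b : ℝ) - 1) ^ (Finset.univ.filter fun l => 1 ≤ j l).card *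
        (b : ℝ) ^ ((∑ l, (j l : ℝ)) / 2) := by
  classical
  set J := (Finset.univ.filter fun l => 1 ≤ j l).card
  have hb₀ : (0 : ℝ) < b := by exact_mod_cast (by omega : 0 < b)
  have hb₁ : (0 : ℝ) ≤ b - 1 := sub_nonneg.2 (by exact_mod_cast (by omega : 1 ≤ b))
  have hcount : (P.countP (· ∈ elemBox b s (fun l => j l - 1) k) : ℝ) ≤ (b : ℝ) ^ J * N / b := by
    rw [le_div_iff₀' hb₀]
    exact_mod_cast hP.mul_countP_sub_one_le (by omega) hj fun l => lt_pow_of_mem_deltaIdx (hk l)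
  calc |(P.map (haarPsiS b s j i k)).sum|
      ≤ (b : ℝ) ^ ((∑ l, (j l : ℝ)) / 2) * (((b : ℝ) - 1) / b) ^ J *
          P.countP (· ∈ elemBox b s (fun l => j l - 1) k) :=
        abs_sum_map_le_mul_countP P fun x _ => abs_haarPsiS_le hb hi hk x
    _ ≤ (b : ℝ) ^ ((∑ l, (j l : ℝ)) / 2) * (((b : ℝ) - 1) / b) ^ J * ((b : ℝ) ^ J * N / b) := by
        gcongr
    _ = (N : ℝ) / b * ((b : ℝ) - 1) ^ J * (b : ℝ) ^ ((∑ l, (j l : ℝ)) / 2) := by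
        rw [div_pow]
        field_simp

/-- Bound on the sum of a fine-scale wavelet over the points of a
`(t,m,s)`-net: `|Σ_{p∈P} Ψ^j_{i,k}(p)| ≤ b^{t-1} (b-1)^J b^{|j|/2}` whenever `|j| ≥ m-t+1`. -/
theorem net_wavelet_sum_bound (b s t m : ℕ) (hb : 2 ≤ b) (hs : 1 ≤ s) (htm : t ≤ m)
    (P : Multiset (Fin s → ℝ)) (hP : IsNet b s t m P)
    (j i k : Fin s → ℕ) (hj : m - t + 1 ≤ ∑ ℓ, j ℓ)
    (hi : ∀ ℓ, i ℓ ∈ nablaIdx b (j ℓ)) (hk : ∀ ℓ, k ℓ ∈ deltaIdx b (j ℓ)) :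
    |(P.map (haarPsiS b s j i k)).sum| ≤
      (b : ℝ) ^ ((t : ℝ) - 1) *
        ((b : ℝ) - 1) ^ ((Finset.univ.filter fun ℓ : Fin s => 1 ≤ j ℓ).card) *
        (b : ℝ) ^ ((∑ ℓ, (j ℓ : ℝ)) / 2) := by
  rw [Real.rpow_sub_one (Nat.cast_ne_zero.2 (by omega)), Real.rpow_natCast, ← Nat.cast_pow]
  exact net_wavelet_sum_bound_general hb hP.hasElemBoxCountLE hj hi hk

end
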